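/- arXiv:2011.10936 — 3 statements merged into one kernel-verified Lean document; each statement's English description precedes it below -/
import Mathlib

section
/- The complex Fresnel integral converges at infinity to (1+i)/2; that is, the function x ↦ ∫₀ˣ exp(iπt²/2) dt tends to (1+i)/2 as the real variable x tends to +∞. -/
open Real Complex Filter intervalIntegral

lemma fresnel_aux_tail (b : ℂ) (hb : 0 ≤ b.re) (hn : 1 ≤ ‖b‖) (x y : ℝ) (hx : 0 < x)
    (hxy : x ≤ y) : ‖∫ t in x..y, Complex.exp (-b * (t : ℂ) ^ 2)‖ ≤ 1 / x := by
  have hb0 : b ≠ 0 := by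
    intro h
    rw [h, norm_zero] at hn
    linarith
  have hE : ∀ t : ℝ, ‖Complex.exp (-b * (t : ℂ) ^ 2)‖ ≤ 1 := by
    intro t
    rw [norm_cexp_neg_mul_sq]
    apply Real.exp_le_one_iff.mpr
    nlinarith [mul_nonneg hb (sq_nonneg t)]
  have hcont : Continuous (fun t : ℝ => Complex.exp (-b * (t : ℂ) ^ 2)) := by fun_prop
  have hG : ∀ t : ℝ, 0 < t → ‖Complex.exp (-b * (t : ℂ) ^ 2) / (2 * b * t)‖ ≤ 1 / (2 * t) := by
    intro t ht
    rw [norm_div, norm_mul, norm_mul, Complex.norm_real, Real.norm_of_nonneg ht.le]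
    have : ‖(2 : ℂ)‖ = 2 := by simp
    rw [this]
    apply div_le_div₀ zero_le_one (hE t) (by positivity)
    nlinarith
  have hder : ∀ t : ℝ, 0 < t → HasDerivAt (fun y : ℝ => (∫ t in x..y, Complex.exp (-b * (t : ℂ) ^ 2))
      + Complex.exp (-b * (y : ℂ) ^ 2) / (2 * b * y))
      (-(Complex.exp (-b * (t : ℂ) ^ 2) / (2 * b * t ^ 2))) t := by
    intro t ht
    have ht0 : (t : ℂ) ≠ 0 := by exact_mod_cast ht.ne'
    have h1 := intervalIntegral.integral_hasDerivAt_right (hcont.intervalIntegrable x t)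
      (hcont.stronglyMeasurableAtFilter _ _) hcont.continuousAt
    have h2 : HasDerivAt (fun z : ℂ => Complex.exp (-b * z ^ 2) / (2 * b * z))
        ((Complex.exp (-b * (t : ℂ) ^ 2) * (-b * (2 * t)) * (2 * b * t)
          - Complex.exp (-b * (t : ℂ) ^ 2) * (2 * b)) / (2 * b * t) ^ 2) (t : ℂ) := by
      have h3 : HasDerivAt (fun z : ℂ => -b * z ^ 2) (-b * (2 * t)) (t : ℂ) := by
        simpa using (hasDerivAt_pow 2 (t : ℂ)).const_mul (-b)
      have h4 : HasDerivAt (fun z : ℂ => 2 * b * z) (2 * b) (t : ℂ) := by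
        simpa using (hasDerivAt_id (t : ℂ)).const_mul (2 * b)
      exact h3.cexp.div h4 (by simp [hb0, ht0])
    convert! h1.add h2.comp_ofReal using 1
    field_simp
    ring
  have hpos : ∀ t ∈ Set.Icc x y, 0 < t := fun t ht => hx.trans_le ht.1
  have hB : ∀ t : ℝ, 0 < t →
      HasDerivAt (fun t : ℝ => 1 / x - (1 / 2) * t⁻¹) (1 / (2 * t ^ 2)) t := by
    intro t ht
    convert! ((hasDerivAt_inv ht.ne').const_mul (1 / 2 : ℝ)).const_sub (1 / x) using 1
    field_simp
  have key : ∀ ⦃t⦄, t ∈ Set.Icc x y → ‖(∫ s in x..t, Complex.exp (-b * (s : ℂ) ^ 2))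
      + Complex.exp (-b * (t : ℂ) ^ 2) / (2 * b * t)‖ ≤ 1 / x - (1 / 2) * t⁻¹ := by
    refine image_norm_le_of_norm_deriv_right_le_deriv_boundary'
      (f' := fun t : ℝ => (-(Complex.exp (-b * (t : ℂ) ^ 2) / (2 * b * t ^ 2))))
      (B' := fun t => 1 / (2 * t ^ 2)) ?_ ?_ ?_ ?_ ?_ ?_
    · intro t ht
      exact (hder t (hpos t ht)).continuousAt.continuousWithinAt
    · intro t ht
      exact (hder t (hpos t ⟨ht.1, ht.2.le⟩)).hasDerivWithinAt
    · rw [intervalIntegral.integral_same, zero_add]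
      refine (hG x hx).trans (le_of_eq ?_)
      field_simp
      norm_num
    · intro t ht
      exact (hB t (hpos t ht)).continuousAt.continuousWithinAt
    · intro t ht
      exact (hB t (hpos t ⟨ht.1, ht.2.le⟩)).hasDerivWithinAt
    · intro t ht
      have ht0 := hpos t ⟨ht.1, ht.2.le⟩
      rw [norm_neg, norm_div, norm_mul, norm_mul, norm_pow, Complex.norm_real,
        Real.norm_of_nonneg ht0.le, show ‖(2 : ℂ)‖ = 2 by simp]
      apply div_le_div₀ zero_le_one (hE t) (by positivity)
      nlinarith [sq_nonneg t]
  have h1 := key ⟨hxy, le_refl y⟩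
  have hy := hx.trans_le hxy
  have h2 := hG y hy
  have h3 := norm_sub_le ((∫ s in x..y, Complex.exp (-b * (s : ℂ) ^ 2))
      + Complex.exp (-b * (y : ℂ) ^ 2) / (2 * b * y)) (Complex.exp (-b * (y : ℂ) ^ 2) / (2 * b * y))
  rw [add_sub_cancel_right] at h3
  have h4 : 1 / (2 * y) = (1 / 2) * y⁻¹ := by field_simp
  linarith

theorem fresnel_tendsto_atTop :
    Tendsto (fun x : ℝ => ∫ t in (0:ℝ)..x, Complex.exp (Complex.I * π * (t : ℂ) ^ 2 / 2))
      atTop (nhds ((1 + Complex.I) / 2)) := by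
  let β : ℝ → ℂ := fun ε => (ε : ℂ) - Complex.I * π / 2
  have hβre : ∀ ε, (β ε).re = ε := by intro ε; simp [β]
  have hβn : ∀ ε, 1 ≤ ‖β ε‖ := by
    intro ε
    have h := Complex.abs_im_le_norm (β ε)
    have h2 : (β ε).im = -(π / 2) := by simp [β]
    rw [h2, abs_neg, abs_of_pos (by positivity)] at h
    linarith [Real.pi_gt_three]
  have hβc : Continuous β := by fun_prop
  have step1 : ∀ ε : ℝ, 0 < ε → ∀ x : ℝ, 0 < x →
      ‖(π / β ε) ^ (1 / 2 : ℂ) / 2 - ∫ t in (0:ℝ)..x, Complex.exp (-(β ε) * (t : ℂ) ^ 2)‖ ≤ 1 / x := by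
    intro ε hε x hx
    have hre : 0 < (β ε).re := by rw [hβre]; exact hε
    rw [← integral_gaussian_complex_Ioi hre]
    have hi := integrable_cexp_neg_mul_sq hre
    have hT := MeasureTheory.intervalIntegral_tendsto_integral_Ioi 0 hi.integrableOn tendsto_id
    refine le_of_tendsto (hT.sub_const _).norm ?_
    filter_upwards [eventually_ge_atTop x] with y hy
    rw [id, intervalIntegral.integral_interval_sub_left hi.intervalIntegrable hi.intervalIntegrable]
    exact fresnel_aux_tail _ hre.le (hβn ε) x y hx hy
  have hI : π / β 0 = (1 + Complex.I) ^ 2 := by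
    have : (π : ℂ) ≠ 0 := by exact_mod_cast Real.pi_ne_zero
    simp only [β]
    rw [div_eq_iff]
    · ring_nf
      simp only [Complex.I_sq, show Complex.I ^ 3 = -Complex.I by simp [pow_succ]]
      push_cast
      ring
    · simp
  have hL : ((π : ℂ) / β 0) ^ (1 / 2 : ℂ) / 2 = (1 + Complex.I) / 2 := by
    rw [hI, one_div, Complex.sq_cpow_two_inv (by simp)]
  have step2 : ∀ x : ℝ, 0 < x →
      ‖(1 + Complex.I) / 2 - ∫ t in (0:ℝ)..x, Complex.exp (-(β 0) * (t : ℂ) ^ 2)‖ ≤ 1 / x := by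
    intro x hx
    rw [← hL]
    have c1 : ContinuousAt (fun ε => ((π : ℂ) / β ε) ^ (1 / 2 : ℂ) / 2) 0 := by
      have h0 : β 0 ≠ 0 := by
        intro h
        have := hβn 0
        rw [h, norm_zero] at this
        linarith
      have hs : (π : ℂ) / β 0 ∈ Complex.slitPlane := by
        rw [hI, Complex.mem_slitPlane_iff]
        right
        simp [pow_two]
      exact ((continuousAt_const.div hβc.continuousAt h0).cpow continuousAt_const hs).div_const _
    have c2 : Continuous (fun ε => ∫ t in (0:ℝ)..x, Complex.exp (-(β ε) * (t : ℂ) ^ 2)) := by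
      apply intervalIntegral.continuous_parametric_intervalIntegral_of_continuous'
      fun_prop
    have c3 := (c1.sub c2.continuousAt).norm.tendsto.mono_left (nhdsWithin_le_nhds (s := Set.Ioi 0))
    refine le_of_tendsto c3 ?_
    filter_upwards [self_mem_nhdsWithin] with ε hε
    exact step1 ε hε x hx
  rw [tendsto_iff_norm_sub_tendsto_zero]
  refine squeeze_zero' (Eventually.of_forall fun _ => norm_nonneg _) ?_
    (tendsto_const_nhds.div_atTop tendsto_id : Tendsto (fun x : ℝ => 1 / id x) atTop (nhds 0))
  filter_upwards [eventually_gt_atTop 0] with x hx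
  rw [norm_sub_rev]
  have he : ∀ t : ℝ, Complex.exp (Complex.I * π * (t : ℂ) ^ 2 / 2)
      = Complex.exp (-(β 0) * (t : ℂ) ^ 2) := by
    intro t
    congr 1
    simp only [β, Complex.ofReal_zero]
    ring
  simp only [he]
  exact step2 x hx
end

section
/- For every real x > 0, the function t ↦ t^{-2} exp(iπt²/2) is integrable on (x, ∞) and (1+i)/2 - G(x) = (i/π)·exp(iπx²/2)/x - (i/π)·∫_x^∞ t^{-2} exp(iπt²/2) dt. -/
open Real Complex intervalIntegral MeasureTheory

noncomputable def fresnelG (x : ℝ) : ℂ :=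
  ∫ t in (0:ℝ)..x, Complex.exp (Complex.I * π * (t : ℂ) ^ 2 / 2)

open Filter Topology

lemma aux_inv_sq (x : ℝ) (hx : 0 < x) :
    IntegrableOn (fun t : ℝ => (t ^ 2)⁻¹) (Set.Ioi x) := by
  refine (integrableOn_Ioi_rpow_of_lt (a := -2) (by norm_num) hx).congr_fun ?_ measurableSet_Ioi
  intro t ht
  have : 0 < t := hx.trans ht
  simp [Real.rpow_neg this.le]

lemma aux_bound (b : ℂ) (hb : 0 ≤ b.re) (t : ℝ) :
    ‖((t : ℂ) ^ 2)⁻¹ * cexp (-b * (t : ℂ) ^ 2)‖ ≤ (t ^ 2)⁻¹ := by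
  rw [norm_mul, norm_cexp_neg_mul_sq, norm_inv, norm_pow, Complex.norm_real, Real.norm_eq_abs,
    sq_abs]
  refine mul_le_of_le_one_right (by positivity) ?_
  rw [Real.exp_le_one_iff]
  nlinarith [mul_nonneg hb (sq_nonneg t)]

lemma aux_meas (b : ℂ) (x : ℝ) : AEStronglyMeasurable
    (fun t : ℝ => ((t : ℂ) ^ 2)⁻¹ * cexp (-b * (t : ℂ) ^ 2)) (volume.restrict (Set.Ioi x)) := by
  apply Measurable.aestronglyMeasurable
  fun_prop

lemma aux_int (b : ℂ) (hb : 0 ≤ b.re) (x : ℝ) (hx : 0 < x) :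
    IntegrableOn (fun t : ℝ => ((t : ℂ) ^ 2)⁻¹ * cexp (-b * (t : ℂ) ^ 2)) (Set.Ioi x) :=
  (aux_inv_sq x hx).mono' (aux_meas b x) (Eventually.of_forall fun t => aux_bound b hb t)

lemma aux_tend (b : ℂ) (hb : 0 < b.re) :
    Tendsto (fun t : ℝ => -(cexp (-b * (t : ℂ) ^ 2) / (2 * b * t))) atTop (𝓝 0) := by
  have h0 : Tendsto (fun t : ℝ => ‖(2 * b)⁻¹‖ * t⁻¹) atTop (𝓝 0) := by
    simpa using (tendsto_inv_atTop_zero (𝕜 := ℝ)).const_mul ‖(2 * b)⁻¹‖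
  refine squeeze_zero_norm' ?_ h0
  filter_upwards [eventually_gt_atTop 0] with t ht
  rw [norm_neg, div_eq_mul_inv, mul_inv, norm_mul, norm_cexp_neg_mul_sq, norm_mul, norm_inv (t : ℂ),
    Complex.norm_real, Real.norm_of_nonneg ht.le]
  refine mul_le_of_le_one_left (by positivity) ?_
  rw [Real.exp_le_one_iff]
  nlinarith [mul_nonneg hb.le (sq_nonneg t)]

lemma aux_ibp (b : ℂ) (hb : 0 < b.re) (x : ℝ) (hx : 0 < x) :
    (π / b) ^ (1 / 2 : ℂ) / 2 - ∫ t in (0:ℝ)..x, cexp (-b * (t : ℂ) ^ 2) =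
      cexp (-b * (x : ℂ) ^ 2) / (2 * b * x) -
        (2 * b)⁻¹ * ∫ t in Set.Ioi x, ((t : ℂ) ^ 2)⁻¹ * cexp (-b * (t : ℂ) ^ 2) := by
  have hb0 : b ≠ 0 := by rintro rfl; simp at hb
  have hI := integrable_cexp_neg_mul_sq hb
  have h1 := integral_Ioi_of_hasDerivAt_of_tendsto' (a := x) (m := 0)
    (f := fun t : ℝ => -(cexp (-b * (t : ℂ) ^ 2) / (2 * b * t)))
    (f' := fun t : ℝ => cexp (-b * (t : ℂ) ^ 2) +
      (2 * b)⁻¹ * (((t : ℂ) ^ 2)⁻¹ * cexp (-b * (t : ℂ) ^ 2)))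
    (by
      intro t ht
      have ht0 : (t : ℂ) ≠ 0 := by
        exact_mod_cast (hx.trans_le ht).ne'
      have e : HasDerivAt (fun z : ℂ => -(cexp (-b * z ^ 2) / (2 * b * z)))
        (cexp (-b * (t : ℂ) ^ 2) +
          (2 * b)⁻¹ * (((t : ℂ) ^ 2)⁻¹ * cexp (-b * (t : ℂ) ^ 2))) (t : ℂ) := by
        have e1 := (((hasDerivAt_pow 2 (t : ℂ)).const_mul (-b)).cexp.div
          ((hasDerivAt_id (t : ℂ)).const_mul (2 * b)) (by simp [hb0, ht0])).neg
        refine e1.congr_deriv ?_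
        simp only [id]
        field_simp
        push_cast
        ring
      exact e.comp_ofReal)
    (hI.integrableOn.add ((aux_int b hb.le x hx).const_mul _))
    (aux_tend b hb)
  rw [integral_add hI.integrableOn ((aux_int b hb.le x hx).const_mul _),
    MeasureTheory.integral_const_mul] at h1
  have h2 := integral_gaussian_complex_Ioi hb
  have h3 := intervalIntegral.integral_Ioi_sub_Ioi (f := fun t : ℝ => cexp (-b * (t : ℂ) ^ 2))
    (μ := volume) (a := 0) (b := x) hI.integrableOn hx.le
  rw [← h2, ← h3]
  linear_combination h1

lemma aux_sqrt : (2 * I) ^ (1 / 2 : ℂ) = 1 + I := by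
  have h : (2 * I : ℂ) = (1 + I) ^ 2 := by
    ring_nf; simp
  rw [h, show (1 / 2 : ℂ) = ((2 : ℕ) : ℂ)⁻¹ by norm_num]
  have ha : arg (1 + I) = π / 4 := by
    have : (1 + I : ℂ) = (√2 : ℝ) * (Complex.cos (π / 4 : ℝ) + Complex.sin (π / 4 : ℝ) * I) := by
      rw [← Complex.ofReal_cos, ← Complex.ofReal_sin, Real.cos_pi_div_four, Real.sin_pi_div_four]
      have : ((√2 : ℝ) : ℂ) * (√2 : ℝ) = 2 := by
        rw [← Complex.ofReal_mul]; norm_num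
      push_cast
      linear_combination (-(1 + I) / 2) * this
    rw [this]
    exact Complex.arg_mul_cos_add_sin_mul_I (by positivity) ⟨by linarith [pi_pos], by linarith [pi_pos]⟩
  refine Complex.pow_cpow_nat_inv two_ne_zero ?_ ?_ <;> rw [ha] <;> push_cast <;> linarith [pi_pos]

theorem fresnel_first_ibp (x : ℝ) (hx : 0 < x) :
    IntegrableOn (fun t : ℝ => ((t : ℂ) ^ 2)⁻¹ * Complex.exp (Complex.I * π * (t : ℂ) ^ 2 / 2))
      (Set.Ioi x) ∧
    (1 + Complex.I) / 2 - fresnelG x =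
      (Complex.I / π) * Complex.exp (Complex.I * π * (x : ℂ) ^ 2 / 2) / x -
        (Complex.I / π) *
          ∫ t in Set.Ioi x, ((t : ℂ) ^ 2)⁻¹ * Complex.exp (Complex.I * π * (t : ℂ) ^ 2 / 2) := by
  have hpi : (π : ℂ) ≠ 0 := by exact_mod_cast pi_ne_zero
  have hx0 : (x : ℂ) ≠ 0 := by exact_mod_cast hx.ne'
  let b : ℝ → ℂ := fun e => e - I * π / 2
  have hbre : ∀ e, (b e).re = e := fun e => by simp [b]
  have hbc : Continuous b := by fun_prop
  have hb0 : b 0 = -(I * π / 2) := by simp [b]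
  have hb0' : b 0 ≠ 0 := by rw [hb0]; simp [hpi]
  have hE : ∀ t : ℝ, Complex.exp (Complex.I * π * (t : ℂ) ^ 2 / 2) = cexp (-(b 0) * (t : ℂ) ^ 2) := by
    intro t; rw [hb0]; congr 1; ring
  have hinv : I / π = (2 * b 0)⁻¹ := by
    rw [hb0]; field_simp; simp
  have hpb : π / b 0 = 2 * I := by
    rw [hb0]; field_simp; simp
  unfold fresnelG
  simp only [hE]
  refine ⟨aux_int (b 0) (hbre 0).ge x hx, ?_⟩
  have hbt : Tendsto b (𝓝[>] 0) (𝓝 (b 0)) := hbc.continuousAt.tendsto.mono_left nhdsWithin_le_nhds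
  have L1 : Tendsto (fun e => (π / b e) ^ (1 / 2 : ℂ) / 2) (𝓝[>] 0) (𝓝 ((1 + I) / 2)) := by
    rw [← aux_sqrt, ← hpb]
    refine Tendsto.div_const ?_ _
    refine Tendsto.cpow (tendsto_const_nhds.div hbt hb0') tendsto_const_nhds ?_
    rw [hpb]; right; simp
  have L2 : Tendsto (fun e => ∫ t in (0:ℝ)..x, cexp (-(b e) * (t : ℂ) ^ 2)) (𝓝[>] 0)
      (𝓝 (∫ t in (0:ℝ)..x, cexp (-(b 0) * (t : ℂ) ^ 2))) := by
    have : Continuous (fun e => ∫ t in (0:ℝ)..x, cexp (-(b e) * (t : ℂ) ^ 2)) :=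
      intervalIntegral.continuous_parametric_intervalIntegral_of_continuous'
        (by unfold Function.uncurry; fun_prop) _ _
    exact this.continuousAt.tendsto.mono_left nhdsWithin_le_nhds
  have L3 : Tendsto (fun e => cexp (-(b e) * (x : ℂ) ^ 2) / (2 * b e * x)) (𝓝[>] 0)
      (𝓝 (cexp (-(b 0) * (x : ℂ) ^ 2) / (2 * b 0 * x))) := by
    refine Tendsto.div ?_ ((hbt.const_mul 2).mul_const _) (by simp [hb0', hx0])
    exact (Complex.continuous_exp.tendsto _).comp (hbt.neg.mul_const _)
  have L4 : Tendsto (fun e => ∫ t in Set.Ioi x, ((t : ℂ) ^ 2)⁻¹ * cexp (-(b e) * (t : ℂ) ^ 2))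
      (𝓝[>] 0) (𝓝 (∫ t in Set.Ioi x, ((t : ℂ) ^ 2)⁻¹ * cexp (-(b 0) * (t : ℂ) ^ 2))) := by
    refine tendsto_integral_filter_of_dominated_convergence (fun t => (t ^ 2)⁻¹)
      (Eventually.of_forall fun e => aux_meas _ _) ?_ (aux_inv_sq x hx) ?_
    · filter_upwards [self_mem_nhdsWithin] with e he
      exact Eventually.of_forall fun t => aux_bound _ (by rw [hbre]; exact (le_of_lt he)) t
    · refine Eventually.of_forall fun t => Tendsto.const_mul _ ?_
      exact (Complex.continuous_exp.tendsto _).comp (hbt.neg.mul_const _)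
  have L5 : Tendsto (fun e => (2 * b e)⁻¹) (𝓝[>] 0) (𝓝 ((2 * b 0)⁻¹)) :=
    (hbt.const_mul 2).inv₀ (by simp [hb0'])
  have key := tendsto_nhds_unique_of_eventuallyEq (L1.sub L2) (L3.sub (L5.mul L4)) (by
    filter_upwards [self_mem_nhdsWithin] with e he
    exact aux_ibp (b e) (by rw [hbre]; exact he) x hx)
  rw [key, hinv]
  congr 1
  field_simp
end

section
/- Let k ≥ 1 be a natural number and x > 0 a real number. Then the functions t ↦ t^{-2k} exp(iπt²/2) and t ↦ t^{-2k-2} exp(iπt²/2) are integrable on (x, ∞) and ∫_x^∞ t^{-2k} exp(iπt²/2) dt = (i/π)·x^{-(2k+1)}·exp(iπx²/2) - (i(2k+1)/π)·∫_x^∞ t^{-(2k+2)} exp(iπt²/2) dt. -/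
open Real Complex MeasureTheory

lemma fresnel_norm_exp (t : ℝ) :
    ‖Complex.exp (Complex.I * π * (t : ℂ) ^ 2 / 2)‖ = 1 := by
  have h : Complex.I * π * (t : ℂ) ^ 2 / 2 = ((π * t ^ 2 / 2 : ℝ) : ℂ) * Complex.I := by
    push_cast; ring
  rw [h, Complex.norm_exp_ofReal_mul_I]

lemma fresnel_integrable (n : ℕ) (hn : 2 ≤ n) (x : ℝ) (hx : 0 < x) :
    IntegrableOn (fun t : ℝ =>
        ((t : ℂ) ^ n)⁻¹ * Complex.exp (Complex.I * π * (t : ℂ) ^ 2 / 2)) (Set.Ioi x) := by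
  have hn' : (2 : ℝ) ≤ n := by exact_mod_cast hn
  have h := integrableOn_Ioi_rpow_of_lt (a := -(n : ℝ)) (by linarith) hx
  refine Integrable.mono' h ?_ ?_
  · apply ContinuousOn.aestronglyMeasurable _ measurableSet_Ioi
    apply ContinuousOn.mul
    · apply ContinuousOn.inv₀ (by fun_prop)
      intro t ht
      have : t ≠ 0 := (hx.trans ht).ne'
      exact pow_ne_zero _ (by exact_mod_cast this)
    · fun_prop
  · filter_upwards [ae_restrict_mem measurableSet_Ioi] with t ht
    have ht0 : 0 < t := hx.trans ht
    rw [norm_mul, fresnel_norm_exp, mul_one, norm_inv, norm_pow, Complex.norm_real,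
      Real.norm_of_nonneg ht0.le, Real.rpow_neg ht0.le, Real.rpow_natCast]

lemma fresnel_deriv (k : ℕ) (t : ℝ) (ht : 0 < t) :
    HasDerivAt (fun t : ℝ =>
        ((t : ℂ) ^ (2 * k + 1))⁻¹ * Complex.exp (Complex.I * π * (t : ℂ) ^ 2 / 2))
      (Complex.I * π *
        (((t : ℂ) ^ (2 * k))⁻¹ * Complex.exp (Complex.I * π * (t : ℂ) ^ 2 / 2)) -
        ((2 * k + 1 : ℕ) : ℂ) *
        (((t : ℂ) ^ (2 * k + 2))⁻¹ * Complex.exp (Complex.I * π * (t : ℂ) ^ 2 / 2))) t := by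
  have ht0 : (t : ℂ) ≠ 0 := by exact_mod_cast ht.ne'
  have h1 : HasDerivAt (fun z : ℂ => (z ^ (2 * k + 1))⁻¹)
      (-(((2 * k + 1 : ℕ) : ℂ) * (t : ℂ) ^ (2 * k)) / ((t : ℂ) ^ (2 * k + 1)) ^ 2) (t : ℂ) :=
    (hasDerivAt_pow (2 * k + 1) (t : ℂ)).fun_inv (pow_ne_zero _ ht0)
  have h2 : HasDerivAt (fun z : ℂ => Complex.I * π * z ^ 2 / 2) (Complex.I * π * t) (t : ℂ) := by
    have := ((hasDerivAt_pow 2 (t : ℂ)).const_mul (Complex.I * π)).div_const 2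
    convert! this using 1
    push_cast
    ring
  have h3 := (h1.mul h2.cexp).comp_ofReal
  convert! h3 using 1
  field_simp
  ring

lemma fresnel_tendsto (k : ℕ) :
    Filter.Tendsto (fun t : ℝ =>
        ((t : ℂ) ^ (2 * k + 1))⁻¹ * Complex.exp (Complex.I * π * (t : ℂ) ^ 2 / 2))
      Filter.atTop (nhds 0) := by
  rw [tendsto_zero_iff_norm_tendsto_zero]
  have h : Filter.Tendsto (fun t : ℝ => ‖(t ^ (2 * k + 1))⁻¹‖) Filter.atTop (nhds 0) :=
    tendsto_zero_iff_norm_tendsto_zero.1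
      (Filter.tendsto_pow_atTop (by omega)).inv_tendsto_atTop
  refine h.congr fun t => ?_
  rw [norm_mul, fresnel_norm_exp, mul_one, norm_inv, norm_inv, norm_pow, norm_pow,
    Complex.norm_real]

theorem fresnel_ibp_step (k : ℕ) (hk : 1 ≤ k) (x : ℝ) (hx : 0 < x) :
    IntegrableOn (fun t : ℝ =>
        ((t : ℂ) ^ (2 * k))⁻¹ * Complex.exp (Complex.I * π * (t : ℂ) ^ 2 / 2)) (Set.Ioi x) ∧
    IntegrableOn (fun t : ℝ =>
        ((t : ℂ) ^ (2 * k + 2))⁻¹ * Complex.exp (Complex.I * π * (t : ℂ) ^ 2 / 2)) (Set.Ioi x) ∧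
    (∫ t in Set.Ioi x, ((t : ℂ) ^ (2 * k))⁻¹ * Complex.exp (Complex.I * π * (t : ℂ) ^ 2 / 2)) =
      (Complex.I / π) * ((x : ℂ) ^ (2 * k + 1))⁻¹ * Complex.exp (Complex.I * π * (x : ℂ) ^ 2 / 2) -
        (Complex.I * (2 * k + 1 : ℕ) / π) *
          ∫ t in Set.Ioi x,
            ((t : ℂ) ^ (2 * k + 2))⁻¹ * Complex.exp (Complex.I * π * (t : ℂ) ^ 2 / 2) := by
  have hA := fresnel_integrable (2 * k) (by omega) x hx
  have hB := fresnel_integrable (2 * k + 2) (by omega) x hx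
  refine ⟨hA, hB, ?_⟩
  have hA' := hA.const_mul (Complex.I * π)
  have hB' := hB.const_mul ((2 * k + 1 : ℕ) : ℂ)
  have h := integral_Ioi_of_hasDerivAt_of_tendsto'
    (fun t (ht : t ∈ Set.Ici x) => fresnel_deriv k t (hx.trans_le ht))
    (hA'.sub hB') (fresnel_tendsto k)
  rw [integral_sub hA' hB', integral_const_mul, integral_const_mul] at h
  have hpi : (π : ℂ) ≠ 0 := by exact_mod_cast Real.pi_ne_zero
  generalize (∫ t in Set.Ioi x, ((t : ℂ) ^ (2 * k))⁻¹ *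
    Complex.exp (Complex.I * π * (t : ℂ) ^ 2 / 2)) = A at h ⊢
  generalize (∫ t in Set.Ioi x, ((t : ℂ) ^ (2 * k + 2))⁻¹ *
    Complex.exp (Complex.I * π * (t : ℂ) ^ 2 / 2)) = B at h ⊢
  rw [mul_assoc (Complex.I / π)]
  generalize ((x : ℂ) ^ (2 * k + 1))⁻¹ * Complex.exp (Complex.I * π * (x : ℂ) ^ 2 / 2) = F at h ⊢
  generalize ((2 * k + 1 : ℕ) : ℂ) = c at h ⊢
  field_simp
  linear_combination (-Complex.I) * h + A * π * Complex.I_sq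
end
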